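/- Let (q_j)_{j≥1} be an enumeration of the points of ℝ² with rational coordinates, let E := ⋃_{j≥1} B(q_j, 2^{-j}), let f := χ_E, and let O_E := { x ∈ ℝ² : lim_{r→0} L²(B(x,r) ∩ E)/L²(B(x,r)) = 0 }. Then f^∨(x) = 0 for every x ∈ O_E, while f^∨(y) = 1 for every y ∈ B(q_j, 2^{-j}) and every j ≥ 1; consequently, f^∨ is not upper semicontinuous at any point of O_E. -/

import Mathlib

open MeasureTheory Metric Filter Topology
open scoped ENNReal

/-- The upper approximate limit `u^∨(x)` with respect to Lebesgue measure on `ℝ²`,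
valued in the extended reals (with the convention `inf ∅ = +∞`). -/
noncomputable def upperApproxLimit
    (u : EuclideanSpace ℝ (Fin 2) → ℝ) (x : EuclideanSpace ℝ (Fin 2)) : EReal :=
  sInf ((fun t : ℝ => (t : EReal)) ''
    {t : ℝ | Tendsto
      (fun r : ℝ => volume {y | y ∈ ball x r ∧ t < u y} / volume (ball x r))
      (𝓝[>] (0 : ℝ)) (𝓝 0)})

theorem ual_not_tendsto (x : EuclideanSpace ℝ (Fin 2)) (g : EuclideanSpace ℝ (Fin 2) → ℝ) (t : ℝ)
    (h : ∀ᶠ r in 𝓝[>] (0 : ℝ), ∀ y ∈ ball x r, t < g y) :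
    ¬ Tendsto (fun r : ℝ => volume {y | y ∈ ball x r ∧ t < g y} / volume (ball x r))
      (𝓝[>] (0 : ℝ)) (𝓝 0) := by
  intro hT
  have h1 : Tendsto (fun r : ℝ => volume {y | y ∈ ball x r ∧ t < g y} / volume (ball x r))
      (𝓝[>] (0 : ℝ)) (𝓝 1) := by
    refine tendsto_const_nhds.congr' ?_
    filter_upwards [h, self_mem_nhdsWithin] with r hr hr0
    have : {y | y ∈ ball x r ∧ t < g y} = ball x r := by
      ext y
      exact ⟨fun h => h.1, fun h => ⟨h, hr y h⟩⟩
    rw [this, ENNReal.div_self (measure_ball_pos volume x hr0).ne' measure_ball_lt_top.ne]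
  exact zero_ne_one (tendsto_nhds_unique hT h1)

theorem ual_dense (q : ℕ → EuclideanSpace ℝ (Fin 2))
    (hq_range : Set.range q =
      {x : EuclideanSpace ℝ (Fin 2) | ∀ i, ∃ p : ℚ, x i = (p : ℝ)}) : DenseRange q := by
  have h1 : DenseRange (Pi.map (fun (_ : Fin 2) (p : ℚ) => (p : ℝ))) :=
    DenseRange.piMap fun _ => Rat.denseRange_cast
  have h2 : DenseRange ((WithLp.toLp 2 : (Fin 2 → ℝ) → EuclideanSpace ℝ (Fin 2)) ∘
      (Pi.map (fun (_ : Fin 2) (p : ℚ) => (p : ℝ)))) := by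
    refine DenseRange.comp (Function.Surjective.denseRange ?_) h1 (PiLp.continuous_toLp 2 _)
    exact fun x => ⟨WithLp.ofLp x, rfl⟩
  refine Dense.mono ?_ h2
  rw [hq_range]
  rintro _ ⟨p, rfl⟩ i
  exact ⟨p i, rfl⟩

/-- Let `(q_j)_{j ≥ 1}` be an enumeration of the points of `ℝ²` with
rational coordinates (here indexed by `j : ℕ`, with `q j` playing the role of `q_{j+1}`
and radius `2^{-(j+1)}`), let `E = ⋃_j B(q_j, 2^{-j})`, `f = χ_E`, and let `O_E` be the
measure-theoretic exterior of `E`. Then `f^∨ = 0` on `O_E` while `f^∨ = 1` on each ball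
`B(q_j, 2^{-j})`; consequently, `f^∨` is not upper semicontinuous at any point of
`O_E`. -/
theorem upperApproxLimit_not_upperSemicontinuous
    (q : ℕ → EuclideanSpace ℝ (Fin 2))
    (hq_inj : Function.Injective q)
    (hq_range : Set.range q =
      {x : EuclideanSpace ℝ (Fin 2) | ∀ i, ∃ p : ℚ, x i = (p : ℝ)})
    (E : Set (EuclideanSpace ℝ (Fin 2)))
    (hE : E = ⋃ j : ℕ, ball (q j) ((2 : ℝ) ^ (-(j : ℤ) - 1)))
    (f : EuclideanSpace ℝ (Fin 2) → ℝ) (hf : f = E.indicator 1)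
    (OE : Set (EuclideanSpace ℝ (Fin 2)))
    (hOE : OE = {x : EuclideanSpace ℝ (Fin 2) |
      Tendsto (fun r : ℝ => volume (ball x r ∩ E) / volume (ball x r))
        (𝓝[>] (0 : ℝ)) (𝓝 0)}) :
    (∀ x ∈ OE, upperApproxLimit f x = (0 : EReal)) ∧
    (∀ j : ℕ, ∀ y ∈ ball (q j) ((2 : ℝ) ^ (-(j : ℤ) - 1)),
      upperApproxLimit f y = (1 : EReal)) ∧
    (∀ x ∈ OE, ¬ UpperSemicontinuousAt (upperApproxLimit f) x) := by
  classical
  have hind : ∀ y, f y = if y ∈ E then 1 else 0 := by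
    intro y; rw [hf, Set.indicator_apply]; rfl
  have hf0 : ∀ y, 0 ≤ f y := by
    intro y; rw [hind]; split_ifs <;> norm_num
  have hf1 : ∀ y, f y ≤ 1 := by
    intro y; rw [hind]; split_ifs <;> norm_num
  have A : ∀ x ∈ OE, upperApproxLimit f x = (0 : EReal) := by
    intro x hx
    rw [hOE] at hx
    apply le_antisymm
    · refine sInf_le ⟨0, ?_, rfl⟩
      have hs : ∀ r : ℝ, {y | y ∈ ball x r ∧ 0 < f y} = ball x r ∩ E := by
        intro r
        ext y
        by_cases hy : y ∈ E <;> simp [hind, hy]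
      simpa only [Set.mem_ofPred_eq, hs] using hx
    · refine le_sInf ?_
      rintro _ ⟨t, ht, rfl⟩
      by_contra hlt
      have ht0 : t < 0 := by
        have : (t : EReal) < _ := not_le.1 hlt
        exact_mod_cast this
      exact ual_not_tendsto x f t
        (Eventually.of_forall fun r y _ => ht0.trans_le (hf0 y)) ht
  have B : ∀ j : ℕ, ∀ y ∈ ball (q j) ((2 : ℝ) ^ (-(j : ℤ) - 1)),
      upperApproxLimit f y = (1 : EReal) := by
    intro j y hy
    apply le_antisymm
    · refine sInf_le ⟨1, ?_, rfl⟩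
      have hs : ∀ r : ℝ, {z | z ∈ ball y r ∧ 1 < f z} = ∅ := by
        intro r
        ext z
        simp [hf1 z]
      simp only [Set.mem_ofPred_eq, hs, measure_empty, ENNReal.zero_div]
      exact tendsto_const_nhds
    · refine le_sInf ?_
      rintro _ ⟨t, ht, rfl⟩
      by_contra hlt
      have ht1 : t < 1 := by
        have : (t : EReal) < _ := not_le.1 hlt
        exact_mod_cast this
      obtain ⟨ε, hε, hsub⟩ := Metric.isOpen_iff.1 isOpen_ball y hy
      refine ual_not_tendsto y f t ?_ ht
      filter_upwards [Ioo_mem_nhdsGT hε] with r hr z hz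
      have hzE : z ∈ E := by
        rw [hE]
        exact Set.mem_iUnion.2 ⟨j, hsub (ball_subset_ball hr.2.le hz)⟩
      rw [hind, if_pos hzE]
      exact ht1
  refine ⟨A, B, ?_⟩
  intro x hx husc
  have h := husc 1 (by beta_reduce; rw [A x hx]; exact zero_lt_one)
  obtain ⟨j, hj⟩ := (ual_dense q hq_range).exists_mem_open isOpen_interior
    ⟨x, mem_interior_iff_mem_nhds.2 h⟩
  have := interior_subset hj
  rw [Set.mem_ofPred_eq, B j (q j) (mem_ball_self (by positivity))] at this
  exact lt_irrefl _ this
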